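/- arXiv:2209.05028 — 3 statements merged into one kernel-verified Lean document; each statement's English description precedes it below -/
import Mathlib

section
/- Let n, m, k be positive integers, p ∈ (0,1), and let X_1,…,X_n be random variables defined on a common probability space, each with the binomial distribution B(m,p) (no independence assumed). Then E[max_{1≤j≤n} X_j] ≤ k + n·(mp)^{k+1}·e^{mp}. -/
open MeasureTheory Filter Real

noncomputable section

/-- The binomial distribution `B(m, p)` as a measure on `ℝ`:
it assigns mass `C(m,k) pᵏ (1-p)^{m-k}` to the point `k`, for `0 ≤ k ≤ m`. -/
def binomialMeasure (m : ℕ) (p : ℝ) : Measure ℝ :=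
  ∑ k ∈ Finset.range (m + 1),
    ENNReal.ofReal ((m.choose k : ℝ) * p ^ k * (1 - p) ^ (m - k)) • Measure.dirac (k : ℝ)

/-!
Truncating at `k` gives `max_j X_j ≤ k + ∑_j (X_j - k)⁺` pointwise, so linearity of expectation
reduces everything to a single variable, whatever the joint law. The binomial weights are at most
`(mp)^i / i!`, and `(i - k) / i! ≤ 1 / (i - k - 1)!` for `i > k`; shifting the index by `k + 1`
in the resulting sum leaves `(mp)^{k+1}` times a partial sum of the series of `e^{mp}`.
-/

open ProbabilityTheory
open scoped Nat unitInterval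

section Truncation

variable {ι : Type*} [Nonempty ι]

theorem ciSup_le_add_sum_posPart_sub {α : Type*} [ConditionallyCompleteLattice α] [AddCommGroup α]
    [IsOrderedAddMonoid α] [Fintype ι] (x : ι → α) (a : α) : ⨆ j, x j ≤ a + ∑ j, (x j - a)⁺ :=
  ciSup_le fun j ↦ calc
    x j = a + (x j - a) := (add_sub_cancel a (x j)).symm
    _ ≤ a + (x j - a)⁺ := by gcongr; exact le_posPart _
    _ ≤ a + ∑ i, (x i - a)⁺ := by
      gcongr
      exact Finset.single_le_sum (f := fun i ↦ (x i - a)⁺) (fun _ _ ↦ posPart_nonneg _)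
        (Finset.mem_univ j)

variable {Ω : Type*} [MeasurableSpace Ω] {μ : Measure Ω}

theorem integrable_ciSup {E : Type*} [NormedAddCommGroup E] [ConditionallyCompleteLattice E]
    [HasSolidNorm E] [IsOrderedAddMonoid E] [Finite ι] {X : ι → Ω → E}
    (hX : ∀ j, Integrable (X j) μ) : Integrable (fun ω ↦ ⨆ j, X j ω) μ := by
  have := Fintype.ofFinite ι
  have h_sup : Integrable (Finset.univ.sup' Finset.univ_nonempty X) μ :=
    Finset.sup'_induction (p := (Integrable · μ)) _ _ (fun _ hf _ hg ↦ hf.sup hg) fun j _ ↦ hX j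
  convert h_sup using 1
  ext ω
  rw [Finset.sup'_apply, Finset.sup'_univ_eq_ciSup]

theorem integral_ciSup_le_add_sum_integral_posPart_sub [Fintype ι] [IsFiniteMeasure μ]
    {X : ι → Ω → ℝ} (hX : ∀ j, Integrable (X j) μ) (a : ℝ) :
    ∫ ω, ⨆ j, X j ω ∂μ ≤ μ.real Set.univ * a + ∑ j, ∫ ω, (X j ω - a)⁺ ∂μ := by
  have h_excess (j : ι) : Integrable (fun ω ↦ (X j ω - a)⁺) μ :=
    ((hX j).sub (integrable_const a)).pos_part
  have h_sum : Integrable (fun ω ↦ ∑ j, (X j ω - a)⁺) μ :=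
    integrable_finsetSum _ fun j _ ↦ h_excess j
  calc ∫ ω, ⨆ j, X j ω ∂μ
      ≤ ∫ ω, (a + ∑ j, (X j ω - a)⁺) ∂μ :=
        integral_mono (integrable_ciSup hX) ((integrable_const a).add h_sum)
          fun ω ↦ ciSup_le_add_sum_posPart_sub (X · ω) a
    _ = μ.real Set.univ * a + ∑ j, ∫ ω, (X j ω - a)⁺ ∂μ := by
      rw [integral_add (integrable_const a) h_sum, integral_const, smul_eq_mul,
        integral_finsetSum _ fun j _ ↦ h_excess j]

end Truncation

section Binomial

theorem choose_mul_pow_mul_pow_le {p : ℝ} (hp₀ : 0 ≤ p) (hp₁ : p ≤ 1) (m i : ℕ) :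
    (m.choose i : ℝ) * p ^ i * (1 - p) ^ (m - i) ≤ (m * p) ^ i / i ! := by
  have hq : 0 ≤ 1 - p := sub_nonneg.2 hp₁
  calc (m.choose i : ℝ) * p ^ i * (1 - p) ^ (m - i)
      ≤ (m ^ i / i !) * p ^ i * 1 := by
        gcongr
        · exact Nat.choose_le_pow_div i m
        · exact pow_le_one₀ hq (sub_le_self 1 hp₀)
    _ = (m * p) ^ i / i ! := by rw [mul_pow]; ring

theorem succ_div_factorial_add_le (k l : ℕ) : ((l : ℝ) + 1) / (k + 1 + l)! ≤ 1 / l ! := by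
  have h_factorial : (l + 1) * l ! ≤ (k + 1 + l)! := by
    rw [← Nat.factorial_succ]
    exact Nat.factorial_le (by lia)
  rw [div_le_div_iff₀ (by positivity) (by positivity), one_mul]
  exact_mod_cast h_factorial

theorem sum_range_pow_div_factorial_mul_posPart_sub_le {x : ℝ} (hx : 0 ≤ x) (k N : ℕ) :
    ∑ i ∈ Finset.range N, x ^ i / i ! * ((i : ℝ) - k)⁺ ≤ x ^ (k + 1) * exp x := by
  have h_below : ∀ i ∈ Finset.range (k + 1), x ^ i / i ! * ((i : ℝ) - k)⁺ = 0 := fun i hi ↦ by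
    have hik : (i : ℝ) ≤ k := by exact_mod_cast Finset.mem_range_succ_iff.1 hi
    rw [posPart_of_nonpos (sub_nonpos.2 hik), mul_zero]
  have h_shift (l : ℕ) : (((k + 1 + l : ℕ) : ℝ) - k)⁺ = l + 1 := by
    rw [posPart_of_nonneg] <;> push_cast <;> linarith [l.cast_nonneg (α := ℝ)]
  calc ∑ i ∈ Finset.range N, x ^ i / i ! * ((i : ℝ) - k)⁺
      ≤ ∑ i ∈ Finset.range (k + 1 + N), x ^ i / i ! * ((i : ℝ) - k)⁺ :=
        Finset.sum_le_sum_of_subset_of_nonneg (Finset.range_mono (by lia))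
          fun i _ _ ↦ by positivity
    _ = ∑ l ∈ Finset.range N, x ^ (k + 1 + l) * ((l + 1) / (k + 1 + l)!) := by
        rw [Finset.sum_range_add, Finset.sum_eq_zero h_below, zero_add]
        simp only [h_shift, div_mul_eq_mul_div, mul_div_assoc]
    _ ≤ ∑ l ∈ Finset.range N, x ^ (k + 1 + l) * (1 / l !) := by
        gcongr ∑ l ∈ Finset.range N, x ^ (k + 1 + l) * ?_ with l
        exact succ_div_factorial_add_le k l
    _ = x ^ (k + 1) * ∑ l ∈ Finset.range N, x ^ l / l ! := by
        rw [Finset.mul_sum]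
        exact Finset.sum_congr rfl fun l _ ↦ by ring
    _ ≤ x ^ (k + 1) * exp x := by
        gcongr
        exact sum_le_exp_of_nonneg hx N

theorem integral_posPart_sub_map_cast_binomial_le (m k : ℕ) (p : I) :
    ∫ x, (x - k)⁺ ∂Bin(ℝ, m, p) ≤ ((m : ℝ) * p) ^ (k + 1) * exp (m * p) := by
  have hp : 0 ≤ (p : ℝ) := p.2.1
  calc ∫ x, (x - k)⁺ ∂Bin(ℝ, m, p)
      = ∑ i ∈ Finset.range (m + 1),
          (m.choose i * (p : ℝ) ^ i * (1 - p) ^ (m - i)) * ((i : ℝ) - k)⁺ := by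
        simp only [integral_map_cast_binomial, smul_eq_mul, Nat.range_succ_eq_Iic]
    _ ≤ ∑ i ∈ Finset.range (m + 1), (m * (p : ℝ)) ^ i / i ! * ((i : ℝ) - k)⁺ := by
        gcongr with i
        exact choose_mul_pow_mul_pow_le hp p.2.2 m i
    _ ≤ ((m : ℝ) * p) ^ (k + 1) * exp (m * p) :=
        sum_range_pow_div_factorial_mul_posPart_sub_le (by positivity) k (m + 1)

theorem binomialMeasure_eq_map_cast_binomial (m : ℕ) (p : I) :
    binomialMeasure m p = Bin(ℝ, m, p) := by
  rw [binomialMeasure, map_cast_binomial_eq_sum_dirac, Nat.range_succ_eq_Iic]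

end Binomial

/-- **Truncation bound for the expected maximum of binomial variables.**
If `X_1, …, X_n` each have law `B(m, p)` (no independence assumed) and `k` is a positive
integer, then `E[max_j X_j] ≤ k + n (mp)^{k+1} e^{mp}`. -/
theorem expected_max_binomial_truncation_bound (n m k : ℕ) (hn : 0 < n) (hm : 0 < m)
    (hk : 0 < k) (p : ℝ) (hp : p ∈ Set.Ioo (0 : ℝ) 1)
    {Ω : Type*} [MeasurableSpace Ω] (μ : Measure Ω) [IsProbabilityMeasure μ]
    (X : Fin n → Ω → ℝ) (hmeas : ∀ j, Measurable (X j))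
    (hlaw : ∀ j, Measure.map (X j) μ = binomialMeasure m p) :
    (∫ ω, (⨆ j : Fin n, X j ω) ∂μ) ≤
      (k : ℝ) + (n : ℝ) * ((m : ℝ) * p) ^ (k + 1) * Real.exp ((m : ℝ) * p) := by
  have : Nonempty (Fin n) := ⟨⟨0, hn⟩⟩
  lift p to I using Set.Ioo_subset_Icc_self hp
  have h_hasLaw (j : Fin n) : HasLaw (X j) Bin(ℝ, m, p) μ :=
    ⟨(hmeas j).aemeasurable, (hlaw j).trans (binomialMeasure_eq_map_cast_binomial m p)⟩
  have h_integrable (j : Fin n) : Integrable (X j) μ :=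
    ((h_hasLaw j).map_eq ▸ integrable_map_cast_binomial id).comp_measurable (hmeas j)
  have h_excess (j : Fin n) :
      ∫ ω, (X j ω - k)⁺ ∂μ ≤ ((m : ℝ) * p) ^ (k + 1) * exp (m * p) :=
    ((h_hasLaw j).integral_comp (f := fun x ↦ (x - k)⁺)
      (integrable_map_cast_binomial _).aestronglyMeasurable).trans_le
      (integral_posPart_sub_map_cast_binomial_le m k p)
  calc ∫ ω, ⨆ j, X j ω ∂μ
      ≤ k + ∑ j, ∫ ω, (X j ω - k)⁺ ∂μ := by
        simpa using integral_ciSup_le_add_sum_integral_posPart_sub h_integrable k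
    _ ≤ k + ∑ _ : Fin n, ((m : ℝ) * p) ^ (k + 1) * exp (m * p) := by
        gcongr with j
        exact h_excess j
    _ = k + n * ((m : ℝ) * p) ^ (k + 1) * exp (m * p) := by simp [mul_assoc]

end
end

section
/- In the multinomial assignment setting, write p_n = n^{-2} and suppose m(n)·p_n = c·n^{-a}·(1+o(1)) for constants c > 0 and a ∈ (0,1) with a < 1/k for a positive integer k. Then for every δ ∈ (0,1), E[max_{1≤j≤⌊δn⌋} X_{1j}] ≥ k·(1+o(1)); that is, liminf_{n→∞} E[max_{1≤j≤⌊δn⌋} X_{1j}] ≥ k. -/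
open MeasureTheory Filter Real

noncomputable section

/-- The uniform measure on the `n × n` grid of cells. -/
def cellMeasure (n : ℕ) : Measure (Fin n × Fin n) :=
  ((n : ENNReal) ^ 2)⁻¹ • Measure.count

/-- The law of `m` i.i.d. points, each uniformly distributed on the `n × n` grid;
under this measure the matrix of cell counts is multinomial `M(m, n²)`. -/
def gridMeasure (m n : ℕ) : Measure (Fin m → Fin n × Fin n) :=
  Measure.pi fun _ => cellMeasure n

/-- `X_{ij}`: the number of the `m` points falling in cell `(i, j)`. -/
def cellCount {m n : ℕ} (i j : Fin n) (ω : Fin m → Fin n × Fin n) : ℕ :=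
  (Finset.univ.filter fun k => ω k = (i, j)).card

/-- The assignment sum `S(σ) = ∑ i, X_{i σ(i)}`. -/
def assignSum {m n : ℕ} (σ : Equiv.Perm (Fin n)) (ω : Fin m → Fin n × Fin n) : ℝ :=
  ∑ i, (cellCount i (σ i) ω : ℝ)

/-- `max_{σ ∈ S_n} S(σ)`. -/
def maxAssign {m n : ℕ} (ω : Fin m → Fin n × Fin n) : ℝ :=
  ⨆ σ : Equiv.Perm (Fin n), assignSum σ ω

/-- `min_{σ ∈ S_n} S(σ)`. -/
def minAssign {m n : ℕ} (ω : Fin m → Fin n × Fin n) : ℝ :=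
  ⨅ σ : Equiv.Perm (Fin n), assignSum σ ω

/-- `E[max_{σ ∈ S_n} S(σ)]`. -/
def EmaxAssign (m n : ℕ) : ℝ :=
  ∫ ω, maxAssign ω ∂(gridMeasure m n)

/-- `E[min_{σ ∈ S_n} S(σ)]`. -/
def EminAssign (m n : ℕ) : ℝ :=
  ∫ ω, minAssign ω ∂(gridMeasure m n)

/-- The first row of the multinomial matrix: `X_{1j}` is the number of points in cell `(1, j)`
(indexing rows by `Fin n`, the first row is index `0`). -/
def firstRowCount {m n : ℕ} (j : Fin n) (ω : Fin m → Fin n × Fin n) : ℕ :=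
  (Finset.univ.filter fun k => ((ω k).1 : ℕ) = 0 ∧ (ω k).2 = j).card

/-!
Let `N` be the number of pairs of a column in the range and a `k`-subset of the points that all
fall in the first-row cell of that column. Its mean is of order `n * (m / n²) ^ k`, that is
`n ^ (1 - a * k)`, which tends to infinity. The summands `C(X_{1j}, k)` of `N` are negatively
correlated, because no point falls in two cells at once, so `Var N` is at most the sum of the
variances, which is `O(E N)` as `m / n²` is bounded. Chebyshev's inequality gives `P(N = 0) → 0`,
so the maximum is at least `k` with probability tending to `1`.
-/

section Binomial

lemma le_add_choose_succ (x K : ℕ) : x ≤ K + x.choose (K + 1) := by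
  induction x with
  | zero => simp
  | succ x ih =>
    rcases Nat.lt_or_ge x K with h | h
    · omega
    · have := Nat.choose_pos h
      rw [Nat.choose_succ_succ']
      omega

lemma div_pow_le_choose {n k : ℕ} (h : k ≤ n) : ((n : ℝ) / k) ^ k ≤ n.choose k := by
  induction k generalizing n with
  | zero => simp
  | succ k ih =>
    obtain ⟨n, rfl⟩ : ∃ n', n = n' + 1 := ⟨n - 1, by omega⟩
    have hkn : k ≤ n := by omega
    have hratio : (((n + 1 : ℕ) : ℝ) / (k + 1 : ℕ)) ^ k ≤ ((n : ℝ) / k) ^ k := by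
      rcases k.eq_zero_or_pos with rfl | hk
      · simp
      · gcongr ?_ ^ k
        rw [div_le_div_iff₀ (by positivity) (by positivity)]
        have : (k : ℝ) ≤ n := mod_cast hkn
        push_cast
        linarith
    have hrec : ((n + 1).choose (k + 1) : ℝ) =
        n.choose k * (((n + 1 : ℕ) : ℝ) / (k + 1 : ℕ)) := by
      rw [← mul_div_assoc, eq_div_iff (by positivity), mul_comm (n.choose k : ℝ)]
      exact_mod_cast (Nat.add_one_mul_choose_eq n k).symm
    rw [hrec, pow_succ]
    gcongr
    exact hratio.trans (ih hkn)

lemma choose_sq_eq_sum (N k : ℕ) :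
    N.choose k ^ 2 =
      ∑ r ∈ Finset.range (k + 1), k.choose r * (N.choose (k + r) * (k + r).choose k) := by
  rcases lt_or_ge N k with hNk | hkN
  · simp [Nat.choose_eq_zero_of_lt hNk, Nat.choose_eq_zero_of_lt (Nat.lt_add_right _ hNk)]
  · have vandermonde : N.choose k =
        ∑ r ∈ Finset.range (k + 1), (N - k).choose r * k.choose (k - r) := by
      conv_lhs => rw [← Nat.sub_add_cancel hkN]
      rw [Nat.add_choose_eq, Finset.Nat.sum_antidiagonal_eq_sum_range_succ_mk]
    rw [sq]
    nth_rewrite 2 [vandermonde]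
    rw [Finset.mul_sum]
    refine Finset.sum_congr rfl fun r hr => ?_
    rw [Nat.choose_symm (Finset.mem_range_succ_iff.1 hr), Nat.choose_mul (k.le_add_right r),
      Nat.add_sub_cancel_left]
    ring

end Binomial

section SecondMoment

open ProbabilityTheory

lemma measureReal_eq_zero_le_variance_div_sq {Ω : Type*} [MeasurableSpace Ω] {μ : Measure Ω}
    [IsFiniteMeasure μ] {Y : Ω → ℝ} (hY : MemLp Y 2 μ) (hmean : μ[Y] ≠ 0) :
    μ.real {ω | Y ω = 0} ≤ Var[Y; μ] / μ[Y] ^ 2 := by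
  rw [← sq_abs]
  refine ENNReal.toReal_le_of_le_ofReal (div_nonneg (variance_nonneg Y μ) (sq_nonneg _)) ?_
  refine (measure_mono fun ω (hω : Y ω = 0) => ?_).trans
    (meas_ge_le_variance_div_sq hY (abs_pos.2 hmean))
  simp [hω]

end SecondMoment

section SampleCount

open ProbabilityTheory

variable {ι α κ : Type*} [Fintype ι]

open scoped Classical in
/-- The number of points of the finite sample `ω` that lie in `A`. -/
def sampleCount (A : Set α) (ω : ι → α) : ℕ :=
  (Finset.univ.filter fun i => ω i ∈ A).card

lemma choose_sampleCount (A : Set α) (k : ℕ) (ω : ι → α) :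
    ((sampleCount A ω).choose k : ℝ) =
      ∑ S ∈ Finset.powersetCard k (Finset.univ : Finset ι),
        ((S : Set ι).pi fun _ => A).indicator 1 ω := by
  classical
  simp only [Set.indicator_apply, Pi.one_apply, Finset.sum_boole, sampleCount,
    ← Finset.card_powersetCard]
  congr 2
  ext S
  simp [Finset.mem_powersetCard, Finset.subset_iff, Set.mem_pi, and_comm]

lemma sampleCount_le_card (A : Set α) (ω : ι → α) : sampleCount A ω ≤ Fintype.card ι :=
  Finset.card_le_univ _

variable [MeasurableSpace α]

lemma measurable_sampleCount {A : Set α} (hA : MeasurableSet A) :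
    Measurable (sampleCount A : (ι → α) → ℕ) := by
  unfold sampleCount
  simp only [Finset.card_filter]
  exact Finset.measurable_fun_sum _ fun i _ =>
    Measurable.ite (measurable_pi_apply i hA) measurable_const measurable_const

lemma measurable_sup_sampleCount {J : Finset κ} {A : κ → Set α}
    (hA : ∀ j ∈ J, MeasurableSet (A j)) :
    Measurable fun ω : ι → α => J.sup fun j => sampleCount (A j) ω := by
  have hsup : Measurable (J.sup fun j => (sampleCount (A j) : (ι → α) → ℕ)) :=
    Finset.sup_induction measurable_const (fun _ hf _ hg => hf.sup hg)
      fun j hj => measurable_sampleCount (hA j hj)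
  convert hsup using 2 with ω
  rw [Finset.sup_apply]

omit [Fintype ι] in
lemma measurableSet_finset_pi_const (S : Finset ι) {A : Set α} (hA : MeasurableSet A) :
    MeasurableSet ((S : Set ι).pi fun _ => A) :=
  .pi S.countable_toSet fun _ _ => hA

variable (μ : Measure α) [IsProbabilityMeasure μ]

lemma memLp_choose_sampleCount {A : Set α} (hA : MeasurableSet A) (k : ℕ) (q : ENNReal) :
    MemLp (fun ω : ι → α => ((sampleCount A ω).choose k : ℝ)) q (Measure.pi fun _ => μ) := by
  simp_rw [choose_sampleCount]
  exact memLp_finsetSum _ fun S _ =>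
    memLp_indicator_const q (measurableSet_finset_pi_const S hA) 1 (.inr (measure_ne_top _ _))

lemma integrable_sup_sampleCount {J : Finset κ} {A : κ → Set α}
    (hA : ∀ j ∈ J, MeasurableSet (A j)) :
    Integrable (fun ω : ι → α => ((J.sup fun j => sampleCount (A j) ω : ℕ) : ℝ))
      (Measure.pi fun _ => μ) := by
  refine .of_bound (measurable_from_nat.comp
    (measurable_sup_sampleCount hA)).aestronglyMeasurable (Fintype.card ι) (ae_of_all _ fun ω => ?_)
  rw [Real.norm_natCast, Nat.cast_le]
  exact Finset.sup_le fun j _ => sampleCount_le_card (A j) ω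

lemma integral_choose_sampleCount {A : Set α} (hA : MeasurableSet A) (k : ℕ) :
    ∫ ω : ι → α, ((sampleCount A ω).choose k : ℝ) ∂(Measure.pi fun _ => μ) =
      (Fintype.card ι).choose k * μ.real A ^ k := by
  simp_rw [choose_sampleCount]
  rw [integral_finsetSum _ fun S _ =>
    (integrable_const 1).indicator (measurableSet_finset_pi_const S hA)]
  simp_rw [integral_indicator_one (measurableSet_finset_pi_const _ hA), measureReal_def,
    Measure.pi_pi_finset, Finset.prod_const, ENNReal.toReal_pow]
  rw [Finset.sum_powersetCard k _ fun r => (μ A).toReal ^ r, nsmul_eq_mul, Finset.card_univ]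

lemma measureReal_pi_inter_pi_le {A B : Set α} (hAB : Disjoint A B) (S T : Finset ι) :
    (Measure.pi fun _ : ι => μ).real (((S : Set ι).pi fun _ => A) ∩ (T : Set ι).pi fun _ => B) ≤
      μ.real A ^ S.card * μ.real B ^ T.card := by
  classical
  by_cases hST : Disjoint S T
  · have hbox : ((S : Set ι).pi fun _ => A) ∩ ((T : Set ι).pi fun _ => B) =
        ((S ∪ T : Finset ι) : Set ι).pi fun i => if i ∈ S then A else B := by
      rw [Finset.coe_union, Set.union_pi]
      refine congrArg₂ _ (Set.pi_congr rfl fun i hi => ?_) (Set.pi_congr rfl fun i hi => ?_)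
      · rw [if_pos (Finset.mem_coe.1 hi)]
      · rw [if_neg (Finset.disjoint_right.1 hST hi)]
    rw [hbox, measureReal_def, Measure.pi_pi_finset, Finset.prod_union hST,
      Finset.prod_congr rfl fun i hi => by rw [if_pos hi],
      Finset.prod_congr (s₁ := T) rfl fun i hi => by rw [if_neg (Finset.disjoint_right.1 hST hi)]]
    simp [measureReal_def]
  · obtain ⟨i, hiS, hiT⟩ := Finset.not_disjoint_iff.1 hST
    have hempty : ((S : Set ι).pi fun _ => A) ∩ ((T : Set ι).pi fun _ => B) = ∅ :=
      Set.eq_empty_of_forall_notMem fun ω hω =>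
        Set.disjoint_left.1 hAB (hω.1 i hiS) (hω.2 i hiT)
    rw [hempty, measureReal_empty]
    positivity

lemma integral_choose_mul_choose_sampleCount_le {A B : Set α} (hA : MeasurableSet A)
    (hB : MeasurableSet B) (hAB : Disjoint A B) (k l : ℕ) :
    ∫ ω : ι → α, ((sampleCount A ω).choose k : ℝ) * (sampleCount B ω).choose l
        ∂(Measure.pi fun _ => μ) ≤
      ((Fintype.card ι).choose k * μ.real A ^ k) * ((Fintype.card ι).choose l * μ.real B ^ l) := by
  have hbox (S T : Finset ι) :
      MeasurableSet (((S : Set ι).pi fun _ => A) ∩ (T : Set ι).pi fun _ => B) :=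
    (measurableSet_finset_pi_const S hA).inter (measurableSet_finset_pi_const T hB)
  have hint (S T : Finset ι) : Integrable
      ((((S : Set ι).pi fun _ => A) ∩ (T : Set ι).pi fun _ => B).indicator (1 : (ι → α) → ℝ))
      (Measure.pi fun _ : ι => μ) :=
    (integrable_const 1).indicator (hbox S T)
  have hexpand (ω : ι → α) : ((sampleCount A ω).choose k : ℝ) * (sampleCount B ω).choose l =
      ∑ S ∈ Finset.powersetCard k (Finset.univ : Finset ι),
        ∑ T ∈ Finset.powersetCard l (Finset.univ : Finset ι),
          (((S : Set ι).pi fun _ => A) ∩ (T : Set ι).pi fun _ => B).indicator 1 ω := by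
    simp_rw [choose_sampleCount, Finset.sum_mul_sum, Set.inter_indicator_one, Pi.mul_apply]
  simp_rw [hexpand]
  rw [integral_finsetSum _ fun S _ => integrable_finsetSum _ fun T _ => hint S T]
  simp_rw [integral_finsetSum _ fun T _ => hint _ T, integral_indicator_one (hbox _ _)]
  calc _ ≤ ∑ S ∈ Finset.powersetCard k (Finset.univ : Finset ι),
        ∑ T ∈ Finset.powersetCard l (Finset.univ : Finset ι),
          μ.real A ^ S.card * μ.real B ^ T.card := by
        gcongr
        exact measureReal_pi_inter_pi_le μ hAB _ _
    _ = _ := by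
        rw [← Finset.sum_mul_sum, Finset.sum_powersetCard k _ (μ.real A ^ ·),
          Finset.sum_powersetCard l _ (μ.real B ^ ·), nsmul_eq_mul, nsmul_eq_mul, Finset.card_univ]

lemma covariance_choose_sampleCount_nonpos {A B : Set α} (hA : MeasurableSet A)
    (hB : MeasurableSet B) (hAB : Disjoint A B) (k l : ℕ) :
    cov[fun ω : ι → α => ((sampleCount A ω).choose k : ℝ),
      fun ω => ((sampleCount B ω).choose l : ℝ); Measure.pi fun _ => μ] ≤ 0 := by
  rw [covariance_eq_sub (memLp_choose_sampleCount μ hA k 2) (memLp_choose_sampleCount μ hB l 2),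
    integral_choose_sampleCount μ hA, integral_choose_sampleCount μ hB, sub_nonpos]
  exact integral_choose_mul_choose_sampleCount_le μ hA hB hAB k l

lemma variance_choose_sampleCount_le {A : Set α} (hA : MeasurableSet A) (k : ℕ) :
    Var[fun ω : ι → α => ((sampleCount A ω).choose k : ℝ); Measure.pi fun _ => μ] ≤
      (Fintype.card ι).choose k * μ.real A ^ k * (1 + Fintype.card ι * μ.real A) ^ k := by
  set m := Fintype.card ι
  set p := μ.real A
  have : 0 ≤ p := measureReal_nonneg
  have hterm (r : ℕ) : (m.choose (k + r) * (k + r).choose k : ℝ) ≤ m.choose k * m ^ r := by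
    have := (Nat.choose_le_pow (m - k) r).trans (Nat.pow_le_pow_left (m.sub_le k) r)
    rw [← Nat.cast_mul, Nat.choose_mul (k.le_add_right r), Nat.add_sub_cancel_left]
    exact_mod_cast Nat.mul_le_mul_left _ this
  calc _ ≤ ∫ ω : ι → α, ((sampleCount A ω).choose k : ℝ) ^ 2 ∂(Measure.pi fun _ => μ) :=
        variance_le_expectation_sq (memLp_choose_sampleCount μ hA k 2).aestronglyMeasurable
    _ = ∑ r ∈ Finset.range (k + 1),
          k.choose r * ((m.choose (k + r) * p ^ (k + r)) * (k + r).choose k) := by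
        simp_rw [← Nat.cast_pow, choose_sq_eq_sum, Nat.cast_sum, Nat.cast_mul]
        rw [integral_finsetSum _ fun r _ =>
          (((memLp_choose_sampleCount μ hA (k + r) 1).integrable le_rfl).mul_const _).const_mul _]
        simp_rw [integral_const_mul, integral_mul_const, integral_choose_sampleCount μ hA]
        rfl
    _ = ∑ r ∈ Finset.range (k + 1),
          k.choose r * (m.choose (k + r) * (k + r).choose k) * p ^ (k + r) := by
        refine Finset.sum_congr rfl fun r _ => by ring
    _ ≤ ∑ r ∈ Finset.range (k + 1), k.choose r * (m.choose k * m ^ r) * p ^ (k + r) := by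
        refine Finset.sum_le_sum fun r _ => ?_
        gcongr _ * ?_ * _
        exact hterm r
    _ = m.choose k * p ^ k * (1 + m * p) ^ k := by
        rw [add_comm (1 : ℝ), add_pow, Finset.mul_sum]
        refine Finset.sum_congr rfl fun r _ => by ring

variable {J : Finset κ} {A : κ → Set α} (hA : ∀ j ∈ J, MeasurableSet (A j))
include hA

lemma variance_sum_choose_sampleCount_le (hdisj : (J : Set κ).PairwiseDisjoint A) (k : ℕ) :
    Var[fun ω : ι → α => ∑ j ∈ J, ((sampleCount (A j) ω).choose k : ℝ); Measure.pi fun _ => μ] ≤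
      ∑ j ∈ J, (Fintype.card ι).choose k * μ.real (A j) ^ k *
        (1 + Fintype.card ι * μ.real (A j)) ^ k := by
  classical
  rw [variance_fun_sum' fun j hj => memLp_choose_sampleCount μ (hA j hj) k 2]
  refine Finset.sum_le_sum fun j hj => ?_
  rw [← Finset.add_sum_erase _ _ hj]
  have hoff : ∑ l ∈ J.erase j, cov[fun ω : ι → α => ((sampleCount (A j) ω).choose k : ℝ),
      fun ω => ((sampleCount (A l) ω).choose k : ℝ); Measure.pi fun _ => μ] ≤ 0 :=
    Finset.sum_nonpos fun l hl => by
      obtain ⟨hlj, hl⟩ := Finset.mem_erase.1 hl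
      exact covariance_choose_sampleCount_nonpos μ (hA j hj) (hA l hl) (hdisj hj hl hlj.symm) k k
  rw [covariance_self (memLp_choose_sampleCount μ (hA j hj) k 2).aemeasurable]
  linarith [variance_choose_sampleCount_le (ι := ι) μ (hA j hj) k]

lemma integral_sum_choose_sampleCount (k : ℕ) :
    ∫ ω : ι → α, ∑ j ∈ J, ((sampleCount (A j) ω).choose k : ℝ) ∂(Measure.pi fun _ => μ) =
      ∑ j ∈ J, (Fintype.card ι).choose k * μ.real (A j) ^ k := by
  rw [integral_finsetSum _ fun j hj =>
    (memLp_choose_sampleCount μ (hA j hj) k 1).integrable le_rfl]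
  exact Finset.sum_congr rfl fun j hj => integral_choose_sampleCount μ (hA j hj) k

lemma measureReal_sup_sampleCount_lt_le (hdisj : (J : Set κ).PairwiseDisjoint A) {p : ℝ}
    (hp : ∀ j ∈ J, μ.real (A j) ≤ p) (k : ℕ)
    (hpos : 0 < ∑ j ∈ J, ((Fintype.card ι).choose k * μ.real (A j) ^ k)) :
    (Measure.pi fun _ => μ).real {ω : ι → α | (J.sup fun j => sampleCount (A j) ω) < k} ≤
      (1 + Fintype.card ι * p) ^ k / ∑ j ∈ J, ((Fintype.card ι).choose k * μ.real (A j) ^ k) := by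
  set M := ∑ j ∈ J, ((Fintype.card ι).choose k * μ.real (A j) ^ k)
  let Y (ω : ι → α) : ℝ := ∑ j ∈ J, ((sampleCount (A j) ω).choose k : ℝ)
  have hmean : (Measure.pi fun _ => μ)[Y] = M := integral_sum_choose_sampleCount μ hA k
  have hvar : Var[Y; Measure.pi fun _ => μ] ≤ M * (1 + Fintype.card ι * p) ^ k := by
    refine (variance_sum_choose_sampleCount_le μ hA hdisj k).trans ?_
    rw [Finset.sum_mul]
    gcongr with j hj
    exact hp j hj
  have hY : MemLp Y 2 (Measure.pi fun _ => μ) :=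
    memLp_finsetSum _ fun j hj => memLp_choose_sampleCount μ (hA j hj) k 2
  have hsub : {ω : ι → α | (J.sup fun j => sampleCount (A j) ω) < k} ⊆ {ω | Y ω = 0} :=
    fun ω hω => Finset.sum_eq_zero fun j hj => by
      have hj : sampleCount (A j) ω < k :=
        (Finset.le_sup (f := fun j => sampleCount (A j) ω) hj).trans_lt hω
      rw [Nat.choose_eq_zero_of_lt hj, Nat.cast_zero]
  calc _ ≤ (Measure.pi fun _ => μ).real {ω | Y ω = 0} := measureReal_mono hsub
    _ ≤ Var[Y; Measure.pi fun _ => μ] / M ^ 2 := by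
      rw [← hmean]
      exact measureReal_eq_zero_le_variance_div_sq hY (hmean ▸ hpos.ne')
    _ ≤ M * (1 + Fintype.card ι * p) ^ k / M ^ 2 := by gcongr
    _ = _ := by field_simp

lemma le_integral_sup_sampleCount (hdisj : (J : Set κ).PairwiseDisjoint A) {p : ℝ}
    (hp : ∀ j ∈ J, μ.real (A j) ≤ p) (k : ℕ)
    (hpos : 0 < ∑ j ∈ J, ((Fintype.card ι).choose k * μ.real (A j) ^ k)) :
    k * (1 - (1 + Fintype.card ι * p) ^ k /
        ∑ j ∈ J, ((Fintype.card ι).choose k * μ.real (A j) ^ k)) ≤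
      ∫ ω : ι → α, ((J.sup fun j => sampleCount (A j) ω : ℕ) : ℝ) ∂(Measure.pi fun _ => μ) := by
  refine le_trans ?_ (mul_meas_ge_le_integral_of_nonneg (ae_of_all _ fun ω => Nat.cast_nonneg _)
    (integrable_sup_sampleCount μ hA) k)
  have hcompl : {ω : ι → α | (k : ℝ) ≤ (J.sup fun j => sampleCount (A j) ω : ℕ)} =
      {ω | (J.sup fun j => sampleCount (A j) ω) < k}ᶜ := by
    ext ω
    simp
  have hmeas : MeasurableSet {ω : ι → α | (J.sup fun j => sampleCount (A j) ω) < k} :=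
    measurable_sup_sampleCount hA measurableSet_Iio
  rw [hcompl, probReal_compl_eq_one_sub hmeas]
  gcongr
  exact measureReal_sup_sampleCount_lt_le μ hA hdisj hp k hpos

lemma integral_sup_sampleCount_le (K : ℕ) :
    ∫ ω : ι → α, ((J.sup fun j => sampleCount (A j) ω : ℕ) : ℝ) ∂(Measure.pi fun _ => μ) ≤
      K + ∑ j ∈ J, (Fintype.card ι * μ.real (A j)) ^ (K + 1) := by
  have hpt (ω : ι → α) : ((J.sup fun j => sampleCount (A j) ω : ℕ) : ℝ) ≤
      K + ∑ j ∈ J, ((sampleCount (A j) ω).choose (K + 1) : ℝ) := by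
    have : (J.sup fun j => sampleCount (A j) ω) ≤
        K + ∑ j ∈ J, (sampleCount (A j) ω).choose (K + 1) :=
      Finset.sup_le fun j hj => (le_add_choose_succ _ K).trans <| Nat.add_le_add_left
        (Finset.single_le_sum (f := fun j => (sampleCount (A j) ω).choose (K + 1))
          (fun _ _ => Nat.zero_le _) hj) K
    exact_mod_cast this
  have hint : Integrable (fun ω : ι → α => ∑ j ∈ J, ((sampleCount (A j) ω).choose (K + 1) : ℝ))
      (Measure.pi fun _ => μ) :=
    integrable_finsetSum _ fun j hj =>
      (memLp_choose_sampleCount μ (hA j hj) (K + 1) 1).integrable le_rfl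
  calc _ ≤ ∫ ω : ι → α, (K + ∑ j ∈ J, ((sampleCount (A j) ω).choose (K + 1) : ℝ))
        ∂(Measure.pi fun _ => μ) :=
        integral_mono (integrable_sup_sampleCount μ hA) ((integrable_const _).add hint) hpt
    _ = K + ∑ j ∈ J, (Fintype.card ι).choose (K + 1) * μ.real (A j) ^ (K + 1) := by
        rw [integral_add (integrable_const _) hint, integral_sum_choose_sampleCount μ hA]
        simp
    _ ≤ _ := by
        simp_rw [mul_pow]
        gcongr
        exact_mod_cast Nat.choose_le_pow _ _

end SampleCount

section FirstRow

/-- The cell `(1, j)` of the grid, as the set whose hits `firstRowCount j` counts. -/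
def firstRowCell {n : ℕ} (j : Fin n) : Set (Fin n × Fin n) :=
  {x | (x.1 : ℕ) = 0 ∧ x.2 = j}

/-- `E[max_{j ∈ J} X_{1j}]` for `m` points and a set `J` of columns; the maximum over the empty
set is `0`. -/
def expectedRowMax (m n : ℕ) (J : Finset (Fin n)) : ℝ :=
  ∫ ω, ((J.sup fun j => firstRowCount j ω : ℕ) : ℝ) ∂(gridMeasure m n)

variable {m n : ℕ}

lemma firstRowCount_eq_sampleCount (j : Fin n) (ω : Fin m → Fin n × Fin n) :
    firstRowCount j ω = sampleCount (firstRowCell j) ω := by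
  simp only [firstRowCount, sampleCount, firstRowCell, Set.mem_ofPred_eq]
  congr

lemma pairwise_disjoint_firstRowCell : Pairwise (Function.onFun Disjoint (firstRowCell (n := n))) :=
  fun _ _ hjl => Set.disjoint_left.2 fun _ hj hl => hjl (hj.2.symm.trans hl.2)

lemma firstRowCell_eq_singleton [NeZero n] (j : Fin n) : firstRowCell j = {(0, j)} := by
  ext ⟨i, l⟩
  simp [firstRowCell]

instance isProbabilityMeasure_cellMeasure [NeZero n] : IsProbabilityMeasure (cellMeasure n) where
  measure_univ := by
    rw [cellMeasure, Measure.smul_apply, Measure.count_univ, ENat.card_eq_coe_fintype_card,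
      Fintype.card_prod, Fintype.card_fin, smul_eq_mul, sq]
    push_cast
    exact ENNReal.inv_mul_cancel (by simp [NeZero.ne n]) (by finiteness)

lemma cellMeasure_real_firstRowCell [NeZero n] (j : Fin n) :
    (cellMeasure n).real (firstRowCell j) = 1 / (n : ℝ) ^ 2 := by
  simp [firstRowCell_eq_singleton, cellMeasure, measureReal_def]

lemma expectedRowMax_eq_integral_sampleCount (m : ℕ) (J : Finset (Fin n)) :
    expectedRowMax m n J = ∫ ω : Fin m → Fin n × Fin n,
      ((J.sup fun j => sampleCount (firstRowCell j) ω : ℕ) : ℝ)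
        ∂(Measure.pi fun _ => cellMeasure n) := by
  simp_rw [expectedRowMax, firstRowCount_eq_sampleCount, gridMeasure]

lemma expectedRowMax_le [NeZero n] (m : ℕ) (J : Finset (Fin n)) (K : ℕ) :
    expectedRowMax m n J ≤ K + J.card * ((m : ℝ) / (n : ℝ) ^ 2) ^ (K + 1) := by
  rw [expectedRowMax_eq_integral_sampleCount]
  refine (integral_sup_sampleCount_le _ (fun _ _ => .of_discrete) K).trans_eq ?_
  simp [cellMeasure_real_firstRowCell, div_eq_mul_inv]

lemma le_expectedRowMax {J : Finset (Fin n)} (hJ : J.Nonempty) {k : ℕ} (hkm : k ≤ m) :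
    k * (1 - (k * (1 + (m : ℝ) / (n : ℝ) ^ 2)) ^ k / (J.card * ((m : ℝ) / (n : ℝ) ^ 2) ^ k)) ≤
      expectedRowMax m n J := by
  rcases k.eq_zero_or_pos with rfl | hk
  · simpa [expectedRowMax] using integral_nonneg fun ω => Nat.cast_nonneg _
  have : NeZero n := ⟨hJ.choose.pos.ne'⟩
  have hn : (0 : ℝ) < n := mod_cast NeZero.pos n
  have hm : (0 : ℝ) < m := mod_cast hk.trans_le hkm
  have : (0 : ℝ) < J.card := mod_cast hJ.card_pos
  have hmean : J.card * ((m : ℝ) / (n : ℝ) ^ 2 / k) ^ k ≤ ∑ j ∈ J,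
      ((Fintype.card (Fin m)).choose k * (cellMeasure n).real (firstRowCell j) ^ k) := by
    simp_rw [cellMeasure_real_firstRowCell, Finset.sum_const, nsmul_eq_mul, Fintype.card_fin]
    rw [div_right_comm, div_eq_mul_one_div ((m : ℝ) / k), mul_pow]
    gcongr
    exact div_pow_le_choose hkm
  rw [expectedRowMax_eq_integral_sampleCount]
  refine le_trans ?_ (le_integral_sup_sampleCount (cellMeasure n) (fun _ _ => .of_discrete)
    (pairwise_disjoint_firstRowCell.set_pairwise _)
    (fun j _ => (cellMeasure_real_firstRowCell j).le) k (hmean.trans_lt' (by positivity)))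
  calc _ = k * (1 - (1 + (m : ℝ) / (n : ℝ) ^ 2) ^ k /
        (J.card * ((m : ℝ) / (n : ℝ) ^ 2 / k) ^ k)) := by
        rw [mul_pow, div_pow _ (k : ℝ)]
        field_simp
    _ ≤ _ := by
        rw [Fintype.card_fin, mul_one_div]
        gcongr
        simpa only [Fintype.card_fin] using hmean

end FirstRow

section Asymptotics

open Asymptotics

lemma le_of_pow_self_lt_card_mul_pow {m n k : ℕ} {J : Finset (Fin n)}
    (h : (k : ℝ) ^ k < J.card * ((m : ℝ) / (n : ℝ) ^ 2) ^ k) : k ≤ m := by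
  by_contra! hmk
  refine h.not_ge ?_
  rcases n.eq_zero_or_pos with rfl | hn
  · simp [Subsingleton.elim J ∅]
  have hn1 : (1 : ℝ) ≤ n := mod_cast hn
  have hcard : (J.card : ℝ) ≤ n := mod_cast card_finset_fin_le J
  calc J.card * ((m : ℝ) / (n : ℝ) ^ 2) ^ k ≤ n ^ k * ((k : ℝ) / n) ^ k := by
        gcongr
        · exact hcard.trans (le_self_pow₀ hn1 (by omega))
        · exact le_self_pow₀ hn1 two_ne_zero
    _ = k ^ k := by rw [← mul_pow]; field_simp

variable {m : ℕ → ℕ} {J : ∀ n, Finset (Fin n)}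

lemma isBoundedUnder_le_expectedRowMax {K : ℕ}
    (h : (fun n => (J n).card * ((m n : ℝ) / (n : ℝ) ^ 2) ^ (K + 1)) =O[atTop] fun _ => (1 : ℝ)) :
    IsBoundedUnder (· ≤ ·) atTop fun n => expectedRowMax (m n) n (J n) := by
  obtain ⟨C, hC⟩ := h.bound
  refine ⟨K + C, ?_⟩
  rw [eventually_map]
  filter_upwards [hC, eventually_gt_atTop 0] with n hn hpos
  have : NeZero n := ⟨hpos.ne'⟩
  rw [norm_one, mul_one] at hn
  linarith [expectedRowMax_le (m n) (J n) K, (le_norm_self _).trans hn]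

lemma eventually_lt_expectedRowMax {k : ℕ}
    (hbdd : (fun n => (m n : ℝ) / (n : ℝ) ^ 2) =O[atTop] fun _ => (1 : ℝ))
    (hlim : Tendsto (fun n => (J n).card * ((m n : ℝ) / (n : ℝ) ^ 2) ^ k) atTop atTop)
    {x : ℝ} (hx : x < k) : ∀ᶠ n in atTop, x < expectedRowMax (m n) n (J n) := by
  obtain ⟨C, hC⟩ := hbdd.bound
  have herr : Tendsto (fun n => k * (1 - (k * (1 + C)) ^ k /
      ((J n).card * ((m n : ℝ) / (n : ℝ) ^ 2) ^ k))) atTop (nhds (k : ℝ)) := by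
    simpa using ((hlim.const_div_atTop _).const_sub 1).const_mul (k : ℝ)
  filter_upwards [hC, herr.eventually_const_lt hx, hlim.eventually_gt_atTop ((k : ℝ) ^ k)]
    with n hn hxn hkn
  have hcard : 0 < (J n).card := by
    by_contra! h
    rw [Nat.le_zero.1 h, Nat.cast_zero, zero_mul] at hkn
    exact hkn.not_ge (by positivity)
  rw [norm_one, mul_one] at hn
  refine (hxn.trans_le ?_).trans_le
    (le_expectedRowMax (Finset.card_pos.1 hcard) (le_of_pow_self_lt_card_mul_pow hkn))
  gcongr
  exact (le_norm_self _).trans hn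

lemma natCast_mul_rpow_neg_pow_eventuallyEq (a : ℝ) (k : ℕ) :
    (fun n : ℕ => (n : ℝ) * ((n : ℝ) ^ (-a)) ^ k) =ᶠ[atTop] fun n => (n : ℝ) ^ (1 - a * k) := by
  filter_upwards [eventually_gt_atTop 0] with n hn
  have hn : (0 : ℝ) < n := mod_cast hn
  rw [← rpow_mul_natCast hn.le, sub_eq_add_neg, rpow_add hn, rpow_one, neg_mul]

theorem expected_rowmax_ratherSparse_lower_general {a : ℝ} (ha : 0 < a) {k : ℕ} (hak : a * k < 1)
    (hm : (fun n => (m n : ℝ) / (n : ℝ) ^ 2) =Θ[atTop] fun n => (n : ℝ) ^ (-a))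
    (hJ : (fun n : ℕ => (n : ℝ)) =O[atTop] fun n => ((J n).card : ℝ)) :
    (k : ℝ) ≤ liminf (fun n => expectedRowMax (m n) n (J n)) atTop := by
  have hcard : (fun n => ((J n).card : ℝ)) =O[atTop] fun n : ℕ => (n : ℝ) :=
    .of_bound' (.of_forall fun n => by simpa using card_finset_fin_le (J n))
  have hpow (l : ℕ) : (fun n => (J n).card * ((m n : ℝ) / (n : ℝ) ^ 2) ^ l) =Θ[atTop]
      fun n => (n : ℝ) ^ (1 - a * l) :=
    (IsTheta.mul ⟨hcard, hJ⟩ (hm.pow l)).trans_eventuallyEq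
      (natCast_mul_rpow_neg_pow_eventuallyEq a l)
  have hbdd : (fun n => (m n : ℝ) / (n : ℝ) ^ 2) =O[atTop] fun _ => (1 : ℝ) :=
    hm.isBigO.trans <|
      ((tendsto_rpow_neg_atTop ha).comp tendsto_natCast_atTop_atTop).isBigO_one ℝ
  have hlim : Tendsto (fun n => (J n).card * ((m n : ℝ) / (n : ℝ) ^ 2) ^ k) atTop atTop := by
    have hrpow := (tendsto_rpow_atTop (sub_pos.2 hak)).comp tendsto_natCast_atTop_atTop
    refine ((hpow k).symm.isBigO.trans_tendsto_norm_atTop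
      (tendsto_norm_atTop_atTop.comp hrpow)).congr fun n => norm_of_nonneg (by positivity)
  -- A real `liminf` is a junk value unless the sequence is frequently bounded above; this bound
  -- needs a power `K + 1` with `a * (K + 1) > 1`.
  have hupper : IsBoundedUnder (· ≤ ·) atTop fun n => expectedRowMax (m n) n (J n) := by
    refine isBoundedUnder_le_expectedRowMax (K := ⌈1 / a⌉₊) ((hpow _).isBigO.trans ?_)
    have hexp : 1 - a * ((⌈1 / a⌉₊ + 1 : ℕ) : ℝ) < 0 := by
      have := (div_lt_iff₀' ha).1 ((Nat.le_ceil (1 / a)).trans_lt (lt_add_one _))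
      push_cast
      linarith
    simpa only [Function.comp_def, neg_neg] using
      ((tendsto_rpow_neg_atTop (neg_pos.2 hexp)).comp
        tendsto_natCast_atTop_atTop).isBigO_one ℝ
  refine le_of_forall_lt_imp_le_of_dense fun x hx => ?_
  exact le_liminf_of_le hupper.isCoboundedUnder_ge
    ((eventually_lt_expectedRowMax hbdd hlim hx).mono fun _ => le_of_lt)

lemma natCast_isBigO_card_filter_val_lt_floor {δ : ℝ} (hδ : 0 < δ) :
    (fun n : ℕ => (n : ℝ)) =O[atTop] fun n : ℕ =>
      ((Finset.univ.filter fun j : Fin n => (j : ℕ) < ⌊δ * (n : ℝ)⌋₊).card : ℝ) := by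
  have hfloor : ∀ᶠ n : ℕ in atTop, δ / 2 * n ≤ ⌊δ * (n : ℝ)⌋₊ := by
    filter_upwards [eventually_ge_atTop ⌈2 / δ⌉₊] with n hn
    have hn : 2 ≤ n * δ := (div_le_iff₀ hδ).1 (Nat.ceil_le.1 hn)
    linarith [Nat.lt_floor_add_one (δ * n)]
  refine .of_bound (max 1 (2 / δ)) ?_
  filter_upwards [hfloor] with n hn
  rw [Fin.card_filter_val_lt, Real.norm_natCast, Real.norm_natCast]
  rcases min_choice n ⌊δ * (n : ℝ)⌋₊ with h | h <;> rw [h]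
  · exact le_mul_of_one_le_left n.cast_nonneg (le_max_left _ _)
  · calc (n : ℝ) = 2 / δ * (δ / 2 * n) := by field_simp
      _ ≤ max 1 (2 / δ) * ⌊δ * (n : ℝ)⌋₊ := by gcongr; exact le_max_right _ _

end Asymptotics

/-- **Rather sparse matrices, lower bound for partial row maxima.**
If `m(n) p_n = c n^{-a} (1 + o(1))` with `c > 0`, `0 < a < 1`, `a < 1/k` for a positive
integer `k`, then for every `δ ∈ (0,1)`,
`E[max_{1 ≤ j ≤ ⌊δ n⌋} X_{1j}] ≥ k (1 + o(1))`. -/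
theorem expected_rowmax_ratherSparse_lower (m : ℕ → ℕ) (hm : ∀ n, 0 < m n) (c a : ℝ)
    (hc : 0 < c) (ha0 : 0 < a) (ha1 : a < 1) (k : ℕ) (hk : 0 < k) (hak : a < 1 / (k : ℝ))
    (hmp : Tendsto (fun n : ℕ => ((m n : ℝ) / (n : ℝ) ^ 2) / (c * (n : ℝ) ^ (-a)))
      atTop (nhds 1))
    (δ : ℝ) (hδ0 : 0 < δ) (hδ1 : δ < 1) :
    (k : ℝ) ≤
      Filter.liminf
        (fun n : ℕ =>
          ∫ ω, (((Finset.univ.filter fun j : Fin n => (j : ℕ) < ⌊δ * (n : ℝ)⌋₊).sup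
            fun j => firstRowCount j ω : ℕ) : ℝ) ∂(gridMeasure (m n) n))
        atTop := by
  have hΘ : (fun n => (m n : ℝ) / (n : ℝ) ^ 2) =Θ[atTop] fun n => (n : ℝ) ^ (-a) :=
    (Asymptotics.isTheta_const_mul_right hc.ne').1
      (Asymptotics.isEquivalent_of_tendsto_one hmp).isTheta
  exact expected_rowmax_ratherSparse_lower_general ha0
    ((lt_div_iff₀ (Nat.cast_pos.2 hk)).1 hak) hΘ (natCast_isBigO_card_filter_val_lt_floor hδ0)

end
end

section
/- In the multinomial assignment setting, for every n, E[max_{σ ∈ S_n} Σ_{i=1}^n X_{iσ(i)}] ≥ Σ_{i=1}^{n} E[max_{1≤j≤n−i+1} X_{1j}]; that is, the expected maximum of the assignment process is at least the sum over i from 1 to n of the expected maximum of the first n−i+1 entries of the first row. -/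
/-! Assign columns greedily: process the rows in order and give each row its best column among those
still free. The `n - i` columns that are free at row `i` are determined by the earlier rows, so a
permutation of the columns within row `i`, chosen as a function of the free columns, acts
bijectively on the sample space, whose law is uniform. Hence the `n - i` free entries of row `i` may
be replaced by its first `n - i` entries, and row `i` by the first row, without changing the
expected maximum. -/

open MeasureTheory Filter Real

noncomputable section

section Argmax

variable {α β : Type*} [Nonempty α] [LinearOrder β] [OrderBot β]

/-- A point of the finite set `s` at which `f` is maximal; it is arbitrary when `s` is empty. -/
def argmaxOn (f : α → β) (s : Finset α) : α :=
  Classical.epsilon fun a => a ∈ s ∧ f a = s.sup f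

lemma argmaxOn_spec (f : α → β) {s : Finset α} (hs : s.Nonempty) :
    argmaxOn f s ∈ s ∧ f (argmaxOn f s) = s.sup f := by
  obtain ⟨a, ha, hsup⟩ := s.exists_mem_eq_sup hs f
  exact Classical.epsilon_spec (p := fun a => a ∈ s ∧ f a = s.sup f) ⟨a, ha, hsup.symm⟩

end Argmax

section Greedy

variable {R C β : Type*} [LinearOrder R] [LocallyFiniteOrderBot R]
  [Fintype C] [DecidableEq C] [Nonempty C] [LinearOrder β] [OrderBot β]

/-- The column that the greedy algorithm assigns to row `r` of `X`: a column maximizing `X r` among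
those not assigned to an earlier row (an arbitrary one if all have been assigned). -/
def greedyCol (X : R → C → β) (r : R) : C :=
  argmaxOn (X r) ((Finset.Iio r).attach.image fun s : Finset.Iio r => greedyCol X s)ᶜ
termination_by (Finset.Iio r).card
decreasing_by exact Finset.card_lt_card (Finset.Iio_ssubset_Iio (Finset.mem_Iio.mp s.2))

/-- The columns still available to the greedy algorithm when it reaches row `r`. -/
def freeCols (X : R → C → β) (r : R) : Finset C :=
  ((Finset.Iio r).image (greedyCol X))ᶜ

lemma greedyCol_eq_argmaxOn (X : R → C → β) (r : R) :
    greedyCol X r = argmaxOn (X r) (freeCols X r) := by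
  have himage : (Finset.Iio r).attach.image (fun s : Finset.Iio r => greedyCol X s) =
      (Finset.Iio r).image (greedyCol X) := by ext; simp
  rw [greedyCol, freeCols, himage]

lemma greedyCol_congr {X Y : R → C → β} {r : R} (h : ∀ s ≤ r, X s = Y s) :
    greedyCol X r = greedyCol Y r := by
  induction r using greedyCol.induct with
  | case1 r ih =>
    have hfree : freeCols X r = freeCols Y r :=
      congrArg compl <| Finset.image_congr fun s hs =>
        ih ⟨s, hs⟩ fun t ht => h t (ht.trans (Finset.mem_Iio.mp hs).le)
    rw [greedyCol_eq_argmaxOn, greedyCol_eq_argmaxOn, hfree, h r le_rfl]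

lemma freeCols_congr {X Y : R → C → β} {r : R} (h : ∀ s < r, X s = Y s) :
    freeCols X r = freeCols Y r :=
  congrArg compl <| Finset.image_congr fun _ hs =>
    greedyCol_congr fun t ht => h t (ht.trans_lt (Finset.mem_Iio.mp hs))

lemma freeCols_nonempty (X : R → C → β) {r : R} (hr : (Finset.Iio r).card < Fintype.card C) :
    (freeCols X r).Nonempty := by
  rw [freeCols, ← Finset.card_pos, Finset.card_compl, Nat.sub_pos_iff_lt]
  exact Finset.card_image_le.trans_lt hr

lemma greedyCol_mem_freeCols (X : R → C → β) {r : R}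
    (hr : (Finset.Iio r).card < Fintype.card C) : greedyCol X r ∈ freeCols X r := by
  rw [greedyCol_eq_argmaxOn]
  exact (argmaxOn_spec _ (freeCols_nonempty X hr)).1

lemma apply_greedyCol (X : R → C → β) {r : R} (hr : (Finset.Iio r).card < Fintype.card C) :
    X r (greedyCol X r) = (freeCols X r).sup (X r) := by
  rw [greedyCol_eq_argmaxOn]
  exact (argmaxOn_spec _ (freeCols_nonempty X hr)).2

lemma greedyCol_injective (X : R → C → β) (h : ∀ r : R, (Finset.Iio r).card < Fintype.card C) :
    Function.Injective (greedyCol X) := by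
  refine .of_lt_imp_ne fun s r hsr heq => ?_
  have hs : greedyCol X s ∈ (Finset.Iio r).image (greedyCol X) :=
    Finset.mem_image_of_mem _ (Finset.mem_Iio.mpr hsr)
  exact Finset.mem_compl.mp (greedyCol_mem_freeCols X (h r)) (heq ▸ hs)

lemma card_freeCols (X : R → C → β) (h : ∀ r : R, (Finset.Iio r).card < Fintype.card C) (r : R) :
    (freeCols X r).card = Fintype.card C - (Finset.Iio r).card := by
  rw [freeCols, Finset.card_compl, Finset.card_image_of_injective _ (greedyCol_injective X h)]

end Greedy

lemma exists_perm_map_eq {α : Type*} {s t : Finset α}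
    (h : s.card = t.card) : ∃ ρ : Equiv.Perm α, s.map ρ.toEmbedding = t := by
  classical
  obtain ⟨ρ, hρ⟩ := (Set.powersetCard.isPretransitive (α := α)).exists_smul_eq ⟨s, h⟩ ⟨t, rfl⟩
  exact ⟨ρ, (Finset.map_eq_image _ _).trans (congrArg Subtype.val hρ)⟩

lemma injective_apply_of_invariant {κ Ω : Type*} {f : κ → Ω → Ω}
    (hf : ∀ k, Function.Injective (f k)) {ρ : Ω → κ} (hρ : ∀ k ω, ρ (f k ω) = ρ ω) :
    Function.Injective fun ω => f (ρ ω) ω := by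
  intro ω ω' h
  have hρ' : ρ ω = ρ ω' := by simpa only [hρ] using congrArg ρ h
  exact hf (ρ ω') (by simpa only [hρ'] using h)

section Grid

variable {m n : ℕ}

lemma sum_sup_freeCols_le_maxAssign [NeZero n] (ω : Fin m → Fin n × Fin n) :
    ∑ i, (((freeCols (cellCount · · ω) i).sup (cellCount i · ω) : ℕ) : ℝ) ≤ maxAssign ω := by
  have hcard : ∀ i : Fin n, (Finset.Iio i).card < Fintype.card (Fin n) := by simp
  let σ : Equiv.Perm (Fin n) := Equiv.ofBijective _
    (Finite.injective_iff_bijective.mp (greedyCol_injective (cellCount · · ω) hcard))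
  calc ∑ i, (((freeCols (cellCount · · ω) i).sup (cellCount i · ω) : ℕ) : ℝ)
      = assignSum σ ω := Finset.sum_congr rfl fun i _ =>
        congrArg _ (apply_greedyCol (cellCount · · ω) (hcard i)).symm
    _ ≤ maxAssign ω := le_ciSup (Set.finite_range (assignSum · ω)).bddAbove σ

lemma cellCount_perm_comp (e : Equiv.Perm (Fin n × Fin n)) {i j i' j' : Fin n}
    (he : e (i, j) = (i', j')) (ω : Fin m → Fin n × Fin n) :
    cellCount i' j' (e ∘ ω) = cellCount i j ω := by
  simp only [cellCount, ← he, Function.comp_apply, e.injective.eq_iff]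

lemma firstRowCount_eq_cellCount [NeZero n] (j : Fin n) (ω : Fin m → Fin n × Fin n) :
    firstRowCount j ω = cellCount 0 j ω := by
  simp only [firstRowCount, cellCount, Prod.ext_iff, Fin.ext_iff, Fin.val_zero]

instance isFiniteMeasure_cellMeasure [NeZero n] : IsFiniteMeasure (cellMeasure n) :=
  Measure.smul_finite _ (by simp [NeZero.ne n])

instance isFiniteMeasure_gridMeasure [NeZero n] : IsFiniteMeasure (gridMeasure m n) :=
  inferInstanceAs (IsFiniteMeasure (Measure.pi _))

lemma gridMeasure_eq_smul_count [NeZero n] :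
    gridMeasure m n = ((n : ENNReal) ^ 2)⁻¹ ^ m • Measure.count := by
  refine Measure.ext_of_singleton fun ω => ?_
  rw [gridMeasure, Measure.pi_singleton]
  simp [cellMeasure]

lemma integral_gridMeasure_comp [NeZero n] {T : (Fin m → Fin n × Fin n) → Fin m → Fin n × Fin n}
    (hT : Function.Injective T) (f : (Fin m → Fin n × Fin n) → ℝ) :
    ∫ ω, f (T ω) ∂(gridMeasure m n) = ∫ ω, f ω ∂(gridMeasure m n) := by
  simp only [gridMeasure_eq_smul_count, integral_smul_measure, integral_count,
    (Finite.injective_iff_bijective.mp hT).sum_comp f]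

lemma integral_sup_cellCount_of_card_eq [NeZero n] {i : Fin n}
    {A : (Fin m → Fin n × Fin n) → Finset (Fin n)} {B : Finset (Fin n)}
    (hcard : ∀ ω, (A ω).card = B.card)
    (hA : ∀ (ρ : Equiv.Perm (Fin n)) ω, A (ρ.prodExtendRight i ∘ ω) = A ω) :
    ∫ ω, (((A ω).sup (cellCount i · ω) : ℕ) : ℝ) ∂(gridMeasure m n) =
      ∫ ω, ((B.sup (cellCount i · ω) : ℕ) : ℝ) ∂(gridMeasure m n) := by
  have hperm : ∀ S : Finset (Fin n), S.card = B.card →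
      ∃ ρ : Equiv.Perm (Fin n), S.map ρ.toEmbedding = B := fun _ => exists_perm_map_eq
  choose! ρ hρ using hperm
  let T (ω : Fin m → Fin n × Fin n) := (ρ (A ω)).prodExtendRight i ∘ ω
  have hT : Function.Injective T :=
    injective_apply_of_invariant (f := fun ρ ω => Equiv.Perm.prodExtendRight i ρ ∘ ω)
      (fun ρ => (Equiv.injective _).comp_left) (fun σ ω => congrArg ρ (hA σ ω))
  rw [← integral_gridMeasure_comp hT fun ω => ((B.sup (cellCount i · ω) : ℕ) : ℝ)]
  congr! 3 with ω
  rw [← hρ (A ω) (hcard ω), Finset.sup_map]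
  exact Finset.sup_congr rfl fun j _ =>
    (cellCount_perm_comp _ (Equiv.Perm.prodExtendRight_apply_eq i _ j) ω).symm

lemma integral_sup_cellCount_row_eq [NeZero n] (i i' : Fin n) (B : Finset (Fin n)) :
    ∫ ω, ((B.sup (cellCount i · ω) : ℕ) : ℝ) ∂(gridMeasure m n) =
      ∫ ω, ((B.sup (cellCount i' · ω) : ℕ) : ℝ) ∂(gridMeasure m n) := by
  let e : Equiv.Perm (Fin n × Fin n) := (Equiv.swap i i').prodCongr (Equiv.refl _)
  have he (j : Fin n) : e (i, j) = (i', j) := by simp [e]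
  rw [← integral_gridMeasure_comp (T := (e ∘ ·)) e.injective.comp_left
    (fun ω => ((B.sup (cellCount i' · ω) : ℕ) : ℝ))]
  simp only [cellCount_perm_comp e (he _)]

lemma freeCols_prodExtendRight_comp [NeZero n] (i : Fin n) (ρ : Equiv.Perm (Fin n))
    (ω : Fin m → Fin n × Fin n) :
    freeCols (cellCount · · (ρ.prodExtendRight i ∘ ω)) i = freeCols (cellCount · · ω) i :=
  freeCols_congr fun _ hl => funext fun j =>
    cellCount_perm_comp _ (Equiv.Perm.prodExtendRight_apply_ne ρ hl.ne j) ω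

lemma integral_sup_freeCols [NeZero n] (i : Fin n) :
    ∫ ω, (((freeCols (cellCount · · ω) i).sup (cellCount i · ω) : ℕ) : ℝ) ∂(gridMeasure m n) =
      ∫ ω, (((Finset.univ.filter fun j : Fin n => (j : ℕ) < n - i).sup
        fun j => firstRowCount j ω : ℕ) : ℝ) ∂(gridMeasure m n) := by
  simp only [firstRowCount_eq_cellCount]
  rw [← integral_sup_cellCount_row_eq i 0]
  refine integral_sup_cellCount_of_card_eq (fun ω => ?_) (freeCols_prodExtendRight_comp i)
  rw [card_freeCols _ (by simp), Fin.card_filter_val_lt, Fintype.card_fin, Fin.card_Iio,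
    min_eq_right (Nat.sub_le _ _)]

end Grid

/-- **Greedy lower bound.**  For every `n` and `m`,
`E[max_σ ∑ i, X_{i σ(i)}] ≥ ∑_{i=1}^{n} E[max_{1 ≤ j ≤ n-i+1} X_{1j}]`
(the term for `i` is the expected maximum of the first `n - i + 1` entries of the
first row; below the sum runs over `i ∈ {0, …, n-1}` and uses `n - i` entries). -/
theorem greedy_lower_bound (m n : ℕ) :
    ∑ i ∈ Finset.range n,
      ∫ ω, (((Finset.univ.filter fun j : Fin n => (j : ℕ) < n - i).sup
        fun j => firstRowCount j ω : ℕ) : ℝ) ∂(gridMeasure m n) ≤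
      EmaxAssign m n := by
  obtain rfl | hn := n.eq_zero_or_pos
  · simp [EmaxAssign, maxAssign, assignSum]
  have : NeZero n := ⟨hn.ne'⟩
  calc
    _ = ∑ i, ∫ ω, (((freeCols (cellCount · · ω) i).sup (cellCount i · ω) : ℕ) : ℝ)
          ∂(gridMeasure m n) := by
      simp only [Finset.sum_range, integral_sup_freeCols]
    _ = ∫ ω, ∑ i, (((freeCols (cellCount · · ω) i).sup (cellCount i · ω) : ℕ) : ℝ)
          ∂(gridMeasure m n) := (integral_finsetSum _ fun _ _ => .of_finite).symm
    _ ≤ EmaxAssign m n := integral_mono .of_finite .of_finite sum_sup_freeCols_le_maxAssign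

end
end
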